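/- Let G be a finite connected graph with positive real edge weights and n ≥ 2 distinct distinguished vertices (nodes) labeled 1,…,n, and let i ≠ j be two node labels. Then R_{i,j} · Z(tree) = Σ_A Z({A, Aᶜ}), where the sum is over all subsets A of {1,…,n} with i ∈ A and j ∉ A, and {A, Aᶜ} denotes the two-part partition of {1,…,n} into A and its complement. -/

import Mathlib

/-!
Write `u`, `v` for the nodes `i`, `j`. Grouping the two-component spanning forests that separate
`u` from `v` by the set `A` of nodes in the component of `u` (`grove_bipartition_iff`) turns the
right-hand side into the total weight of these forests, so the claim is Kirchhoff's formula
`resistance_mul_tree`.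

Let `h x` be the total weight of those separating forests in which `x` is joined to `u`
(`forestPotential`); thus `h u` is the total weight of all of them and `h v = 0`. The key fact is
`Δ h = Z(tree) • (δ_u - δ_v)` (`lap_forestPotential`). Indeed, adding an edge `xy` that joins the
two components of a separating forest gives a spanning tree whose path from `u` to `v` uses `xy`,
and this is reversible (`exchange`). Hence `w(xy) * (h x - h y)` is the sum over spanning trees
`t` of the weight of `t` times the flow through `xy` of the unit flow along the path from `u` to
`v` in `t` (`edge_current`), and the net flow of that path out of `x` is `δ_u x - δ_v x`
(`sum_separating_edges`). Therefore `Z(tree) • f - h` is harmonic, so constant by the maximum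
principle (`harmonic_const`); comparing its values at `u` and `v` gives the formula.
-/

section Grove

variable {V : Type} [Fintype V] [DecidableEq V] {n : ℕ}

def groveGraph (F : Finset (Sym2 V)) : SimpleGraph V :=
  SimpleGraph.fromEdgeSet (F : Set (Sym2 V))

/-- A grove: an acyclic edge set F ⊆ E(G) such that every connected component of (V,F)
contains at least one node. -/
def IsGrove (G : SimpleGraph V) (node : Fin n → V) (F : Finset (Sym2 V)) : Prop :=
  (F : Set (Sym2 V)) ⊆ G.edgeSet ∧ (groveGraph F).IsAcyclic ∧
    ∀ v : V, ∃ i : Fin n, (groveGraph F).Reachable v (node i)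

/-- The node partition induced by a grove: i ~ j iff node i, node j are in the same
component. -/
def connSetoid (node : Fin n → V) (F : Finset (Sym2 V)) : Setoid (Fin n) :=
  ⟨fun i j => (groveGraph F).Reachable (node i) (node j),
   ⟨fun _ => SimpleGraph.Reachable.refl _, fun h => h.symm, fun h h' => h.trans h'⟩⟩

-- Z(τ): the weighted sum of groves of node-connection type τ.
-- Note: Z(tree) = Zgrove G w node ⊤ and Z(uncrossing) = Zgrove G w node ⊥.
open Classical in
noncomputable def Zgrove (G : SimpleGraph V) (w : Sym2 V → ℝ) (node : Fin n → V)
    (τ : Setoid (Fin n)) : ℝ :=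
  ∑ F ∈ Finset.univ.filter
      (fun F : Finset (Sym2 V) => IsGrove G node F ∧ connSetoid node F = τ),
    ∏ e ∈ F, w e

end Grove

section Response

variable {V : Type} [Fintype V] [DecidableEq V] {n : ℕ}

-- The weighted Laplacian of (G, w).
open Classical in
noncomputable def lapMatrix' (G : SimpleGraph V) (w : Sym2 V → ℝ) : Matrix V V ℝ :=
  fun u v =>
    if u = v then ∑ x : V, (if G.Adj u x then w s(u, x) else 0)
    else -(if G.Adj u v then w s(u, v) else 0)

/-- The inner (non-node) vertices. -/
def InnerVx (node : Fin n → V) : Type := {v : V // ∀ i : Fin n, node i ≠ v}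

noncomputable instance (node : Fin n → V) : Fintype (InnerVx node) :=
  Subtype.fintype _

instance (node : Fin n → V) : DecidableEq (InnerVx node) :=
  Subtype.instDecidableEq

/-- The response matrix Λ = A − B K⁻¹ Bᵀ of (G, nodes), where Δ = [[A,B],[Bᵀ,K]] is the
block decomposition of the weighted Laplacian with the nodes first. -/
noncomputable def responseMatrix (G : SimpleGraph V) (w : Sym2 V → ℝ)
    (node : Fin n → V) : Matrix (Fin n) (Fin n) ℝ :=
  let Δ := lapMatrix' G w
  let A : Matrix (Fin n) (Fin n) ℝ := Matrix.of fun i j => Δ (node i) (node j)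
  let B : Matrix (Fin n) (InnerVx node) ℝ := Matrix.of fun i u => Δ (node i) u.val
  let Bt : Matrix (InnerVx node) (Fin n) ℝ := Matrix.of fun u j => Δ u.val (node j)
  let K : Matrix (InnerVx node) (InnerVx node) ℝ := Matrix.of fun u v => Δ u.val v.val
  A - B * K⁻¹ * Bt

end Response

/-! ### Spanning trees and separating forests -/

section ForestFlow

variable {V : Type} [Fintype V] [DecidableEq V]

lemma groveGraph_insert (F : Finset (Sym2 V)) (x y : V) :
    groveGraph (insert s(x, y) F) = groveGraph F ⊔ SimpleGraph.edge x y := by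
  ext a b
  simp only [groveGraph, SimpleGraph.edge, SimpleGraph.sup_adj, SimpleGraph.fromEdgeSet_adj,
    Finset.coe_insert, Set.mem_insert_iff, Set.mem_singleton_iff]
  tauto

/-- A spanning tree of `G`, encoded by its edge set; connectedness is expressed by every
vertex being joined to the base vertex `u`. -/
def IsSpanTree (G : SimpleGraph V) (u : V) (t : Finset (Sym2 V)) : Prop :=
  (t : Set (Sym2 V)) ⊆ G.edgeSet ∧ (groveGraph t).IsAcyclic ∧
    ∀ a, (groveGraph t).Reachable a u

/-- A spanning forest of `G` with exactly two components, one containing `u` and the other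
containing `v`. -/
def IsSepForest (G : SimpleGraph V) (u v : V) (F : Finset (Sym2 V)) : Prop :=
  (F : Set (Sym2 V)) ⊆ G.edgeSet ∧ (groveGraph F).IsAcyclic ∧
    ¬ (groveGraph F).Reachable u v ∧
    ∀ a, (groveGraph F).Reachable a u ∨ (groveGraph F).Reachable a v

lemma reachable_insert_iff (F : Finset (Sym2 V)) {x y : V} (hxy : x ≠ y) (a b : V) :
    (groveGraph (insert s(x, y) F)).Reachable a b ↔
      (groveGraph F).Reachable a b ∨
      ((groveGraph F).Reachable a x ∧ (groveGraph F).Reachable y b) ∨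
      ((groveGraph F).Reachable a y ∧ (groveGraph F).Reachable x b) := by
  have hle : groveGraph F ≤ groveGraph (insert s(x, y) F) := by
    rw [groveGraph_insert]; exact le_sup_left
  have hadj : (groveGraph (insert s(x, y) F)).Adj x y := by
    simp [groveGraph, hxy]
  constructor
  · rintro ⟨p⟩
    induction p with
    | nil => exact Or.inl (SimpleGraph.Reachable.refl _)
    | @cons a c b h q ih =>
      rw [groveGraph_insert, SimpleGraph.sup_adj, SimpleGraph.edge_adj] at h
      rcases h with h | ⟨⟨rfl, rfl⟩ | ⟨rfl, rfl⟩, -⟩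
      · have h' := h.reachable
        rcases ih with ih | ⟨i1, i2⟩ | ⟨i1, i2⟩
        · exact Or.inl (h'.trans ih)
        · exact Or.inr (Or.inl ⟨h'.trans i1, i2⟩)
        · exact Or.inr (Or.inr ⟨h'.trans i1, i2⟩)
      · rcases ih with ih | ⟨i1, i2⟩ | ⟨i1, i2⟩
        · exact Or.inr (Or.inl ⟨.refl _, ih⟩)
        · exact Or.inr (Or.inl ⟨.refl _, i2⟩)
        · exact Or.inl i2
      · rcases ih with ih | ⟨i1, i2⟩ | ⟨i1, i2⟩
        · exact Or.inr (Or.inr ⟨.refl _, ih⟩)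
        · exact Or.inl i2
        · exact Or.inr (Or.inr ⟨.refl _, i2⟩)
  · rintro (h | ⟨h1, h2⟩ | ⟨h1, h2⟩)
    · exact h.mono hle
    · exact ((h1.mono hle).trans hadj.reachable).trans (h2.mono hle)
    · exact ((h1.mono hle).trans hadj.symm.reachable).trans (h2.mono hle)

lemma acyclic_insert_iff (F : Finset (Sym2 V)) {x y : V} (hxy : x ≠ y) (he : s(x, y) ∉ F) :
    (groveGraph (insert s(x, y) F)).IsAcyclic ↔
      (groveGraph F).IsAcyclic ∧ ¬ (groveGraph F).Reachable x y := by
  rw [groveGraph_insert, SimpleGraph.isAcyclic_sup_fromEdgeSet_iff]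
  have : ¬ (groveGraph F).Adj x y := by simp [groveGraph, he]
  tauto

open Classical in
/-- The case analysis behind `exchange`, for a symmetric transitive relation `R` in place of
being joined in a forest. -/
lemma exchange_aux (R : V → V → Prop) [DecidableRel R] (hs : ∀ a b, R a b → R b a)
    (ht : ∀ a b c, R a b → R b c → R a c) (P Ac S T : Prop) (u v x y : V)
    (hSep : S ↔ P ∧ Ac ∧ ¬ R u v ∧ ∀ a, R a u ∨ R a v)
    (hTree : T ↔ P ∧ (Ac ∧ ¬ R x y) ∧ ∀ a, R a u ∨ (R a x ∧ R y u) ∨ (R a y ∧ R x u)) :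
    (if S then (if R x u then (1 : ℝ) else 0) - (if R y u then 1 else 0) else 0) =
    (if T then (if R x v then (0 : ℝ) else 1) - (if R x u then 0 else 1) else 0) := by
  simp only [hSep, hTree]
  by_cases hF : P
  swap
  · simp [hF]
  by_cases hAc : Ac
  swap
  · simp [hAc]
  simp only [hF, hAc, true_and]
  by_cases hxy : R x y
  · have : R x u ↔ R y u := ⟨fun h => ht _ _ _ (hs _ _ hxy) h, fun h => ht _ _ _ hxy h⟩
    simp [hxy, this]
  simp only [hxy, not_false_eq_true, true_and]
  by_cases hS : ¬ R u v ∧ ∀ a, R a u ∨ R a v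
  · rw [if_pos hS]
    obtain ⟨huv, hall⟩ := hS
    have hxv : R x v ↔ ¬ R x u :=
      ⟨fun h h' => huv (ht _ _ _ (hs _ _ h') h), fun h => (hall x).resolve_left h⟩
    have hyv : R y v ↔ ¬ R y u :=
      ⟨fun h h' => huv (ht _ _ _ (hs _ _ h') h), fun h => (hall y).resolve_left h⟩
    by_cases hx : R x u <;> by_cases hy : R y u
    · exact absurd (ht _ _ _ hx (hs _ _ hy)) hxy
    · have hT : ∀ a, R a u ∨ (R a x ∧ R y u) ∨ (R a y ∧ R x u) := by
        intro a
        rcases hall a with h | h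
        · exact Or.inl h
        · exact Or.inr (Or.inr ⟨ht _ _ _ h (hs _ _ (hyv.2 hy)), hx⟩)
      rw [if_pos hT]
      simp [hx, hy, hxv]
    · have hT : ∀ a, R a u ∨ (R a x ∧ R y u) ∨ (R a y ∧ R x u) := by
        intro a
        rcases hall a with h | h
        · exact Or.inl h
        · exact Or.inr (Or.inl ⟨ht _ _ _ h (hs _ _ (hxv.2 hx)), hy⟩)
      rw [if_pos hT]
      simp [hx, hy, hxv]
    · exact absurd (ht _ _ _ (hxv.2 hx) (hs _ _ (hyv.2 hy))) hxy
  · rw [if_neg hS]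
    split_ifs with hT h1 h2 h2 <;> try norm_num
    · -- `v` lies on the side of `x`, and `u` on the side of `y`
      apply hS
      have huv : ¬ R u v := fun h => h2 (ht _ _ _ h1 (hs _ _ h))
      refine ⟨huv, fun a => ?_⟩
      rcases hT a with h | ⟨h, h'⟩ | ⟨h, h'⟩
      · exact Or.inl h
      · exact Or.inr (ht _ _ _ h h1)
      · exact absurd h' h2
    · -- `u` lies on the side of `x`, and `v` on the side of `y`
      apply hS
      have huv : ¬ R u v := fun h => h1 (ht _ _ _ h2 h)
      refine ⟨huv, fun a => ?_⟩
      have hvy : R y v := by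
        rcases hT v with h | ⟨h, h'⟩ | ⟨h, h'⟩
        · exact absurd (hs _ _ h) huv
        · exact absurd (hs _ _ h) h1
        · exact hs _ _ h
      rcases hT a with h | ⟨h, h'⟩ | ⟨h, h'⟩
      · exact Or.inl h
      · exact Or.inl (ht _ _ _ h h2)
      · exact Or.inr (ht _ _ _ h hvy)

open Classical in
/-- Exchange step: among the forests `F` separating `u` from `v`, those whose two components
are joined by the edge `xy` are exactly the sets `t \ {xy}`, where `t` is a spanning tree whose
path between `u` and `v` uses `xy`; both sides record the direction of traversal. -/
lemma exchange (G : SimpleGraph V) (u v : V) {x y : V} (hadj : G.Adj x y)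
    (F : Finset (Sym2 V)) (he : s(x, y) ∉ F) :
    (if IsSepForest G u v F then
      (if (groveGraph F).Reachable x u then (1 : ℝ) else 0)
        - (if (groveGraph F).Reachable y u then 1 else 0) else 0) =
    (if IsSpanTree G u (insert s(x, y) F) then
      (if (groveGraph F).Reachable x v then (0 : ℝ) else 1)
        - (if (groveGraph F).Reachable x u then 0 else 1) else 0) := by
  have hsub : ((insert s(x, y) F : Finset (Sym2 V)) : Set (Sym2 V)) ⊆ G.edgeSet ↔
      (F : Set (Sym2 V)) ⊆ G.edgeSet := by
    simp [Set.insert_subset_iff, hadj]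
  refine exchange_aux (groveGraph F).Reachable (fun _ _ h => h.symm)
    (fun _ _ _ h h' => h.trans h') ((F : Set (Sym2 V)) ⊆ G.edgeSet) (groveGraph F).IsAcyclic
    (IsSepForest G u v F) _ u v x y Iff.rfl ?_
  simp only [IsSpanTree, hsub, acyclic_insert_iff F hadj.ne he, reachable_insert_iff F hadj.ne]

lemma groveGraph_erase (t : Finset (Sym2 V)) (e : Sym2 V) :
    groveGraph (t.erase e) = (groveGraph t).deleteEdges {e} := by
  ext a b
  simp only [groveGraph, SimpleGraph.deleteEdges_adj, SimpleGraph.fromEdgeSet_adj,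
    Finset.coe_erase, Set.mem_sdiff, Set.mem_singleton_iff]
  tauto

open Classical in
/-- In a tree, exactly one edge at `x` separates `x` from a vertex `u ≠ x`: the first edge of
the path from `x` to `u`. -/
lemma sum_separating_edges (G : SimpleGraph V) (r : V) (t : Finset (Sym2 V))
    (ht : IsSpanTree G r t) (x u : V) :
    ∑ y, (if s(x, y) ∈ t then
      (if (groveGraph (t.erase s(x, y))).Reachable x u then (0 : ℝ) else 1) else 0) =
      if x = u then 0 else 1 := by
  by_cases hxu : x = u
  · subst hxu; simp
  rw [if_neg hxu]
  obtain ⟨hsub, hac, hcon⟩ := ht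
  obtain ⟨p, hp⟩ := ((hcon x).trans (hcon u).symm).exists_isPath
  cases p with
  | nil => exact absurd rfl hxu
  | @cons _ z _ h q =>
    rw [SimpleGraph.Walk.cons_isPath_iff] at hp
    have hz : s(x, z) ∈ t := by
      have := h
      simp only [groveGraph, SimpleGraph.fromEdgeSet_adj] at this
      exact this.1
    rw [Finset.sum_eq_single z]
    · rw [if_pos hz, if_neg]
      intro hr
      rw [groveGraph_erase] at hr
      have hq : ((groveGraph t).deleteEdges {s(x, z)}).Reachable z u := by
        rw [SimpleGraph.reachable_deleteEdges_iff_exists_walk]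
        exact ⟨q, fun hm => hp.2 (SimpleGraph.Walk.fst_mem_support_of_mem_edges _ hm)⟩
      have hb := (SimpleGraph.isAcyclic_iff_forall_adj_isBridge.1 hac) h
      rw [SimpleGraph.isBridge_iff] at hb
      exact hb (hr.trans hq.symm)
    · intro y _ hyz
      by_cases hy : s(x, y) ∈ t
      · rw [if_pos hy, if_pos]
        rw [groveGraph_erase, SimpleGraph.reachable_deleteEdges_iff_exists_walk]
        refine ⟨SimpleGraph.Walk.cons h q, fun hm => ?_⟩
        rw [SimpleGraph.Walk.edges_cons, List.mem_cons] at hm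
        rcases hm with hm | hm
        · rcases Sym2.eq_iff.1 hm with ⟨-, h2⟩ | ⟨h1, h2⟩
          · exact hyz h2
          · exact hyz (h2.trans h1)
        · exact hp.2 (SimpleGraph.Walk.fst_mem_support_of_mem_edges _ hm)
      · rw [if_neg hy]
    · simp

/-! ### The forest potential and Kirchhoff's formula -/

open Classical in
/-- The unnormalised potential of a unit current from `u` to `v`: at `x`, the total weight of
the two-component forests separating `u` from `v` in which `x` is joined to `u`. -/
noncomputable def forestPotential (G : SimpleGraph V) (w : Sym2 V → ℝ) (u v x : V) : ℝ :=
  ∑ F : Finset (Sym2 V), if IsSepForest G u v F then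
    (∏ e ∈ F, w e) * (if (groveGraph F).Reachable x u then 1 else 0) else 0

open Classical in
/-- The current of the forest potential through `xy` as a sum over spanning trees `t`. The
difference of indicators is the signed flow through `xy` of the path from `u` to `v` in `t`:
`1` if `t \ {xy}` joins `x` to `u` only, `-1` if it joins `x` to `v` only, and `0` otherwise. -/
lemma edge_current (G : SimpleGraph V) (w : Sym2 V → ℝ) (u v : V) {x y : V}
    (hadj : G.Adj x y) :
    w s(x, y) * (forestPotential G w u v x - forestPotential G w u v y) =
    ∑ t : Finset (Sym2 V), if IsSpanTree G u t then (∏ e ∈ t, w e) *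
      (if s(x, y) ∈ t then
        (if (groveGraph (t.erase s(x, y))).Reachable x v then (0 : ℝ) else 1)
        - (if (groveGraph (t.erase s(x, y))).Reachable x u then 0 else 1) else 0) else 0 := by
  have h1 : w s(x, y) * (forestPotential G w u v x - forestPotential G w u v y) =
      ∑ F : Finset (Sym2 V), w s(x, y) * (∏ e ∈ F, w e) *
        (if IsSepForest G u v F then
          (if (groveGraph F).Reachable x u then (1 : ℝ) else 0)
          - (if (groveGraph F).Reachable y u then 1 else 0) else 0) := by
    rw [forestPotential, forestPotential, ← Finset.sum_sub_distrib, Finset.mul_sum]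
    refine Finset.sum_congr rfl fun F _ => ?_
    by_cases hF : IsSepForest G u v F
    · simp only [if_pos hF]; ring
    · simp only [if_neg hF]; ring
  rw [h1, ← Finset.sum_filter_of_ne (p := fun F : Finset (Sym2 V) => s(x, y) ∉ F),
    ← Finset.sum_filter_of_ne (p := fun F : Finset (Sym2 V) => s(x, y) ∈ F) (s := Finset.univ)
      (f := fun t => if IsSpanTree G u t then _ else _)]
  · refine Finset.sum_nbij' (fun F => insert s(x, y) F) (fun t => t.erase s(x, y)) ?_ ?_ ?_ ?_ ?_
    · intro F _; simp
    · intro F _; simp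
    · intro F hF
      exact Finset.erase_insert (Finset.mem_filter.1 hF).2
    · intro t ht
      exact Finset.insert_erase (Finset.mem_filter.1 ht).2
    · intro F hF
      have he := (Finset.mem_filter.1 hF).2
      rw [exchange G u v hadj F he, Finset.prod_insert he, Finset.erase_insert he,
        if_pos (Finset.mem_insert_self _ _)]
      split_ifs <;> ring
  · intro t _ hne
    by_contra hmem
    apply hne
    simp [hmem]
  · intro F _ hne hmem
    apply hne
    -- `x` and `y` are joined by an edge of `F`, so they lie in the same component
    have hxy : (groveGraph F).Reachable x y :=
      SimpleGraph.Adj.reachable (by simp [groveGraph, hmem, hadj.ne])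
    have : (groveGraph F).Reachable x u ↔ (groveGraph F).Reachable y u :=
      ⟨fun h => hxy.symm.trans h, fun h => hxy.trans h⟩
    simp [this]

open Classical in
lemma lapMatrix'_mulVec (G : SimpleGraph V) (w : Sym2 V → ℝ) (g : V → ℝ) (x : V) :
    (lapMatrix' G w).mulVec g x =
      ∑ y, if G.Adj x y then w s(x, y) * (g x - g y) else 0 := by
  have h : ∀ y, lapMatrix' G w x y * g y =
      (if x = y then (∑ z, if G.Adj x z then w s(x, z) else 0) * g x else 0)
        - (if G.Adj x y then w s(x, y) * g y else 0) := by
    intro y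
    unfold lapMatrix'
    by_cases hxy : x = y
    · subst hxy; simp
    · simp [hxy]
  simp only [Matrix.mulVec, dotProduct, h, Finset.sum_sub_distrib, Finset.sum_ite_eq,
    Finset.mem_univ, if_true]
  rw [Finset.sum_mul, ← Finset.sum_sub_distrib]
  refine Finset.sum_congr rfl fun y _ => ?_
  split_ifs <;> ring

open Classical in
/-- The forest potential solves the Poisson equation whose right-hand side is
`δ_u - δ_v` scaled by the total weight of spanning trees. -/
lemma lap_forestPotential (G : SimpleGraph V) (w : Sym2 V → ℝ) (u v x : V) :
    (lapMatrix' G w).mulVec (forestPotential G w u v) x =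
      (∑ t : Finset (Sym2 V), if IsSpanTree G u t then ∏ e ∈ t, w e else 0) *
        ((if x = u then 1 else 0) - (if x = v then 1 else 0)) := by
  rw [lapMatrix'_mulVec]
  have h : ∀ y, (if G.Adj x y then
      w s(x, y) * (forestPotential G w u v x - forestPotential G w u v y) else 0) =
      ∑ t : Finset (Sym2 V), if IsSpanTree G u t then (∏ e ∈ t, w e) *
      (if s(x, y) ∈ t then
        (if (groveGraph (t.erase s(x, y))).Reachable x v then (0 : ℝ) else 1)
        - (if (groveGraph (t.erase s(x, y))).Reachable x u then 0 else 1) else 0) else 0 := by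
    intro y
    by_cases hadj : G.Adj x y
    · rw [if_pos hadj, edge_current G w u v hadj]
    · rw [if_neg hadj]
      symm
      refine Finset.sum_eq_zero fun t _ => ?_
      by_cases ht : IsSpanTree G u t
      · have : s(x, y) ∉ t := fun hm => hadj (ht.1 hm)
        simp [this]
      · rw [if_neg ht]
  rw [Finset.sum_congr rfl fun y _ => h y, Finset.sum_comm, Finset.sum_mul]
  refine Finset.sum_congr rfl fun t _ => ?_
  by_cases ht : IsSpanTree G u t
  · simp only [if_pos ht]
    rw [← Finset.mul_sum]
    congr 1
    have hsplit : ∀ y, (if s(x, y) ∈ t then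
        (if (groveGraph (t.erase s(x, y))).Reachable x v then (0 : ℝ) else 1)
        - (if (groveGraph (t.erase s(x, y))).Reachable x u then 0 else 1) else 0) =
        (if s(x, y) ∈ t then
          (if (groveGraph (t.erase s(x, y))).Reachable x v then (0 : ℝ) else 1) else 0)
        - (if s(x, y) ∈ t then
          (if (groveGraph (t.erase s(x, y))).Reachable x u then (0 : ℝ) else 1) else 0) := by
      intro y
      by_cases hm : s(x, y) ∈ t
      · simp only [if_pos hm]
      · simp only [if_neg hm, sub_zero]
    rw [Finset.sum_congr rfl fun y _ => hsplit y, Finset.sum_sub_distrib,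
      sum_separating_edges G u t ht x v, sum_separating_edges G u t ht x u]
    split_ifs <;> norm_num
  · simp only [if_neg ht, Finset.sum_const_zero, zero_mul]

/-- Maximum principle: harmonic functions on a connected graph are constant. -/
lemma harmonic_const (G : SimpleGraph V) (hG : G.Connected) (w : Sym2 V → ℝ)
    (hw : ∀ e ∈ G.edgeSet, 0 < w e) (g : V → ℝ)
    (hg : ∀ x, (lapMatrix' G w).mulVec g x = 0) (a b : V) : g a = g b := by
  classical
  have := hG.nonempty
  obtain ⟨m, -, hm⟩ := Finset.exists_max_image Finset.univ g Finset.univ_nonempty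
  have key : ∀ z, g z = g m := by
    intro z
    obtain ⟨p⟩ := hG.preconnected z m
    induction p with
    | nil => rfl
    | @cons z c m h q ih =>
      have hc := ih hm
      have h0 := hg c
      rw [lapMatrix'_mulVec, Finset.sum_eq_zero_iff_of_nonneg] at h0
      · have h1 := h0 z (Finset.mem_univ _)
        rw [if_pos h.symm] at h1
        have := (mul_eq_zero.1 h1).resolve_left (hw s(c, z) h.symm).ne'
        linarith
      · intro y _
        split_ifs with hadj
        · have := hm y (Finset.mem_univ _)
          exact mul_nonneg (hw s(c, y) hadj).le (by linarith)
        · exact le_rfl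
  rw [key a, key b]

open Classical in
/-- Kirchhoff's formula for the effective resistance: spanning trees against two-component
forests separating `u` from `v`. -/
lemma resistance_mul_tree (G : SimpleGraph V) (hG : G.Connected) (w : Sym2 V → ℝ)
    (hw : ∀ e ∈ G.edgeSet, 0 < w e) (u v : V) (f : V → ℝ)
    (hf : (lapMatrix' G w).mulVec f =
      fun x => (if x = u then (1 : ℝ) else 0) - (if x = v then 1 else 0)) :
    (f u - f v) * (∑ t : Finset (Sym2 V), if IsSpanTree G u t then ∏ e ∈ t, w e else 0) =
      ∑ F : Finset (Sym2 V), if IsSepForest G u v F then ∏ e ∈ F, w e else 0 := by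
  set T := ∑ t : Finset (Sym2 V), if IsSpanTree G u t then ∏ e ∈ t, w e else 0 with hT
  have hc := harmonic_const G hG w hw (T • f - forestPotential G w u v) (by
    intro x
    rw [Matrix.mulVec_sub, Matrix.mulVec_smul, Pi.sub_apply, Pi.smul_apply,
      lap_forestPotential, hf, smul_eq_mul, sub_eq_zero]) u v
  have hu : forestPotential G w u v u =
      ∑ F : Finset (Sym2 V), if IsSepForest G u v F then ∏ e ∈ F, w e else 0 := by
    simp [forestPotential]
  have hv : forestPotential G w u v v = 0 := by
    refine Finset.sum_eq_zero fun F _ => ?_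
    split_ifs with h h'
    · exact absurd h'.symm h.2.2.1
    · simp
    · rfl
  simp only [Pi.sub_apply, Pi.smul_apply, smul_eq_mul, hu, hv] at hc
  linarith

end ForestFlow

/-! ### Groves with one or two components -/

section NodePartitions

variable {V : Type} [Fintype V] [DecidableEq V] {n : ℕ}

lemma grove_top_iff (G : SimpleGraph V) (node : Fin n → V) (i : Fin n)
    (F : Finset (Sym2 V)) :
    (IsGrove G node F ∧ connSetoid node F = ⊤) ↔ IsSpanTree G (node i) F := by
  constructor
  · rintro ⟨⟨h1, h2, h3⟩, h4⟩
    refine ⟨h1, h2, fun a => ?_⟩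
    obtain ⟨k, hk⟩ := h3 a
    have : connSetoid node F k i := by rw [h4]; trivial
    exact hk.trans this
  · rintro ⟨h1, h2, h3⟩
    refine ⟨⟨h1, h2, fun a => ⟨i, h3 a⟩⟩, ?_⟩
    ext a b
    exact ⟨fun _ => trivial, fun _ => (h3 (node a)).trans (h3 (node b)).symm⟩

open Classical in
/-- The groves of type `{A, Aᶜ}` are the two-component forests separating node `i` from node `j`
for which `A` is the set of nodes in the component of node `i`. -/
lemma grove_bipartition_iff (G : SimpleGraph V) (node : Fin n → V) (i j : Fin n)
    (A : Finset (Fin n)) (hi : i ∈ A) (hj : j ∉ A) (F : Finset (Sym2 V)) :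
    (IsGrove G node F ∧ connSetoid node F = Setoid.ker fun a : Fin n => decide (a ∈ A)) ↔
      IsSepForest G (node i) (node j) F ∧
        Finset.univ.filter (fun a => (groveGraph F).Reachable (node a) (node i)) = A := by
  constructor
  · rintro ⟨⟨h1, h2, h3⟩, h4⟩
    have hR : ∀ a b, (groveGraph F).Reachable (node a) (node b) ↔ (a ∈ A ↔ b ∈ A) := by
      intro a b
      have : connSetoid node F a b ↔ (Setoid.ker fun a : Fin n => decide (a ∈ A)) a b := by
        rw [h4]
      rw [Setoid.ker_def, decide_eq_decide] at this
      exact this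
    refine ⟨⟨h1, h2, ?_, fun a => ?_⟩, ?_⟩
    · rw [hR]; tauto
    · obtain ⟨k, hk⟩ := h3 a
      by_cases hkA : k ∈ A
      · exact Or.inl (hk.trans ((hR k i).2 (by tauto)))
      · exact Or.inr (hk.trans ((hR k j).2 (by tauto)))
    · ext a
      simp only [Finset.mem_filter, Finset.mem_univ, true_and, hR]
      tauto
  · rintro ⟨⟨h1, h2, h3, h4⟩, h5⟩
    refine ⟨⟨h1, h2, fun a => (h4 a).elim (fun h => ⟨i, h⟩) fun h => ⟨j, h⟩⟩, ?_⟩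
    have hA : ∀ a, a ∈ A ↔ (groveGraph F).Reachable (node a) (node i) := by
      intro a; rw [← h5]; simp
    ext a b
    rw [Setoid.ker_def, decide_eq_decide, hA, hA]
    change (groveGraph F).Reachable (node a) (node b) ↔ _
    constructor
    · exact fun h => ⟨fun h' => h.symm.trans h', fun h' => h.trans h'⟩
    · intro h
      by_cases ha : (groveGraph F).Reachable (node a) (node i)
      · exact ha.trans (h.1 ha).symm
      · exact ((h4 _).resolve_left ha).trans ((h4 _).resolve_left fun hb => ha (h.2 hb)).symm

end NodePartitions

/-
STATEMENT 7: Let G be a finite connected graph with positive real edge weights and n ≥ 2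
distinct nodes labeled 1,…,n, and i ≠ j two node labels.  Then
  R_{i,j} · Z(tree) = Σ_{A : i ∈ A, j ∉ A} Z({A,Aᶜ}),
where {A,Aᶜ} is the two-part partition of {1,…,n} into A and its complement.

The effective resistance R_{i,j} is w(node i) − w(node j) for any f : V → ℝ with
Δ f = δ_{node i} − δ_{node j}; we quantify over all such f. The two-part partition
{A,Aᶜ} is the kernel of the indicator function of A; Z(tree) = Zgrove G w node ⊤.
-/
open Classical in
theorem resistance_mul_Ztree_eq_sum_bipartitions
    {V : Type} [Fintype V] [DecidableEq V] (G : SimpleGraph V) (hG : G.Connected)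
    (w : Sym2 V → ℝ) (hw : ∀ e ∈ G.edgeSet, 0 < w e)
    (n : ℕ) (hn : 2 ≤ n) (node : Fin n → V) (hnode : Function.Injective node)
    (i j : Fin n) (hij : i ≠ j)
    (f : V → ℝ)
    (hf : (lapMatrix' G w).mulVec f =
      fun v => (if v = node i then (1 : ℝ) else 0) - (if v = node j then 1 else 0)) :
    (f (node i) - f (node j)) * Zgrove G w node ⊤ =
      ∑ A ∈ Finset.univ.filter (fun A : Finset (Fin n) => i ∈ A ∧ j ∉ A),
        Zgrove G w node (Setoid.ker fun a : Fin n => decide (a ∈ A)) := by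
  have hT : Zgrove G w node ⊤ = ∑ t : Finset (Sym2 V),
      if IsSpanTree G (node i) t then ∏ e ∈ t, w e else 0 := by
    simp only [Zgrove, Finset.sum_filter, grove_top_iff G node i]
  rw [hT, resistance_mul_tree G hG w hw (node i) (node j) f hf, ← Finset.sum_filter,
    ← Finset.sum_fiberwise_of_maps_to (t := Finset.univ.filter
        (fun A : Finset (Fin n) => i ∈ A ∧ j ∉ A))
      (g := fun F => Finset.univ.filter
        (fun a => (groveGraph F).Reachable (node a) (node i)))]
  · refine Finset.sum_congr rfl fun A hA => ?_
    obtain ⟨hi, hj⟩ := (Finset.mem_filter.1 hA).2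
    rw [Zgrove, Finset.filter_filter]
    refine Finset.sum_congr (Finset.filter_congr fun F _ => ?_) fun _ _ => rfl
    exact (grove_bipartition_iff G node i j A hi hj F).symm
  · intro F hF
    have h := (Finset.mem_filter.1 hF).2
    simp only [Finset.mem_filter, Finset.mem_univ, true_and]
    exact ⟨SimpleGraph.Reachable.refl _, fun h' => h.2.2.1 h'.symm⟩
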